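/- Suppose f ∈ H¹(I,ℝⁿ) with derivative f', and for each ε > 0 let u_ε be the minimizer of E_ε over H¹(I,ℝⁿ), with derivative u_ε'. Let p ∈ (1,2], x₀ ∈ I and 0 < r < R with [x₀ − R, x₀ + R] ⊆ I. Then limsup_{ε → 0⁺} ∫_{x₀−r}^{x₀+r} |u_ε'|_ε^p ≤ ∫_{x₀−R}^{x₀+R} ‖f'‖^p. -/

import Mathlib

open MeasureTheory Set Filter
open scoped ENNReal

noncomputable section

/-- Square-integrability of `w` on the set `S`. -/
def SqIntOn {n : ℕ} (w : ℝ → EuclideanSpace ℝ (Fin n)) (S : Set ℝ) : Prop :=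
  MeasureTheory.IntegrableOn (fun x => ‖w x‖ ^ 2) S

/-- `w` belongs to `H¹(I, ℝⁿ)` with (weak) derivative `w'`: it is continuous on `[a,b]`,
`w'` is square-integrable on `I = Ioo a b`, and the fundamental theorem of calculus holds. -/
def InH1 {n : ℕ} (a b : ℝ) (w w' : ℝ → EuclideanSpace ℝ (Fin n)) : Prop :=
  ContinuousOn w (Set.Icc a b) ∧
  MeasureTheory.IntegrableOn (fun x => ‖w' x‖ ^ 2) (Set.Ioo a b) ∧
  ∀ x ∈ Set.Icc a b, ∀ y ∈ Set.Icc a b, w y - w x = ∫ t in x..y, w' t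

/-- The regularized energy `E_ε` evaluated at `w ∈ H¹` with derivative `w'`. -/
def regEnergy {n : ℕ} (lam ε a b : ℝ) (f w w' : ℝ → EuclideanSpace ℝ (Fin n)) : ℝ :=
  ∫ x in Set.Ioo a b, ((1 / (2 * lam)) * ‖w x - f x‖ ^ 2
    + Real.sqrt (‖w' x‖ ^ 2 + ε ^ 2) + (ε ^ 2 / 2) * ‖w' x‖ ^ 2)

/-- `u` (with derivative `u'`) minimizes `E_ε` over `H¹(I, ℝⁿ)`. -/
def IsMinimizerEps {n : ℕ} (lam ε a b : ℝ) (f u u' : ℝ → EuclideanSpace ℝ (Fin n)) : Prop :=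
  InH1 a b u u' ∧ ∀ v v' : ℝ → EuclideanSpace ℝ (Fin n), InH1 a b v v' →
    regEnergy lam ε a b f u u' ≤ regEnergy lam ε a b f v v'


local notation "EE" n => EuclideanSpace ℝ (Fin n)

theorem aux_ac {a b c : ℝ} {φ : ℝ → ℝ} (h : IntervalIntegrable φ volume a b) :
    AbsolutelyContinuousOnInterval (fun x => c + ∫ t in a..x, φ t) a b := by
  have h1 := h.absolutelyContinuousOnInterval_intervalIntegral (c := a) (by simp)
  have h2 : AbsolutelyContinuousOnInterval (fun _ : ℝ => c) a b :=
    (LipschitzWith.const c).lipschitzOnWith.absolutelyContinuousOnInterval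
  exact h2.add h1

theorem ibp_scalar {a b : ℝ} (hab : a ≤ b) {F φ G ψ : ℝ → ℝ}
    (hφ : IntervalIntegrable φ volume a b) (hψ : IntervalIntegrable ψ volume a b)
    (hF : ∀ x ∈ Icc a b, F x = F a + ∫ t in a..x, φ t)
    (hG : ∀ x ∈ Icc a b, G x = G a + ∫ t in a..x, ψ t) :
    ∫ x in a..b, (φ x * G x + F x * ψ x) = F b * G b - F a * G a := by
  have h := (aux_ac (c := F a) hφ).integral_deriv_mul_eq_sub (aux_ac (c := G a) hψ)
  simp only [intervalIntegral.integral_same, add_zero] at h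
  rw [← hF b (right_mem_Icc.2 hab), ← hG b (right_mem_Icc.2 hab)] at h
  rw [← h]
  apply intervalIntegral.integral_congr_ae
  filter_upwards [hφ.ae_hasDerivAt_integral, hψ.ae_hasDerivAt_integral] with x h1 h2 hx
  have hx' : x ∈ uIcc a b := uIoc_subset_uIcc hx
  have hx'' : x ∈ Icc a b := by rwa [uIcc_of_le hab] at hx'
  rw [((h1 hx' a (by simp)).const_add (F a)).deriv, ((h2 hx' a (by simp)).const_add (G a)).deriv,
    ← hF x hx'', ← hG x hx'']

theorem coord_int {n : ℕ} {a b : ℝ} {w : ℝ → EE n} (hw : IntervalIntegrable w volume a b) (i : Fin n) :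
    IntervalIntegrable (fun x => w x i) volume a b := by
  rw [intervalIntegrable_iff] at *
  exact integrable_piLp_iff.1 hw i

theorem ii_mono {E : Type*} [NormedAddCommGroup E] {a b x y : ℝ} {w : ℝ → E}
    (hw : IntervalIntegrable w volume a b) (hab : a ≤ b) (hx : x ∈ Icc a b) (hy : y ∈ Icc a b) :
    IntervalIntegrable w volume x y := by
  apply hw.mono_set
  rw [uIcc_of_le hab]
  exact uIcc_subset_Icc hx hy

theorem coord_eval {n : ℕ} {a b : ℝ} {w : ℝ → EE n} (hw : IntervalIntegrable w volume a b) (i : Fin n) :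
    (∫ x in a..b, w x) i = ∫ x in a..b, w x i :=
  ((EuclideanSpace.proj (𝕜 := ℝ) i : (EE n) →L[ℝ] ℝ).intervalIntegral_comp_comm hw).symm

theorem ibp {n : ℕ} {a b : ℝ} (hab : a ≤ b) {w w' z z' : ℝ → EE n}
    (hw' : IntervalIntegrable w' volume a b) (hz' : IntervalIntegrable z' volume a b)
    (hw : ∀ x ∈ Icc a b, w x = w a + ∫ t in a..x, w' t)
    (hz : ∀ x ∈ Icc a b, z x = z a + ∫ t in a..x, z' t)
    (hwc : ContinuousOn w (Icc a b)) (hzc : ContinuousOn z (Icc a b)) :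
    ∫ x in a..b, (inner ℝ (w' x) (z x) + inner ℝ (w x) (z' x))
      = inner ℝ (w b) (z b) - inner ℝ (w a) (z a) := by
  have key : ∀ i, ∫ x in a..b, (w' x i * z x i + w x i * z' x i) = w b i * z b i - w a i * z a i := by
    intro i
    apply ibp_scalar (F := fun x => w x i) (G := fun x => z x i) hab (coord_int hw' i) (coord_int hz' i)
    · intro x hx
      rw [← coord_eval (ii_mono hw' hab (left_mem_Icc.2 hab) hx), hw x hx]; rfl
    · intro x hx
      rw [← coord_eval (ii_mono hz' hab (left_mem_Icc.2 hab) hx), hz x hx]; rfl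
  have hc : ∀ v : ℝ → EE n, ContinuousOn v (Icc a b) → ∀ i, ContinuousOn (fun x => v x i) (uIcc a b) := by
    intro v hv i
    rw [uIcc_of_le hab]
    exact (EuclideanSpace.proj (𝕜 := ℝ) i : (EE n) →L[ℝ] ℝ).continuous.comp_continuousOn hv
  have e1 : ∀ p q : EE n, inner ℝ p q = ∑ i, p i * q i := by
    intro p q
    simp [PiLp.inner_apply, mul_comm]
  simp only [e1, ← Finset.sum_add_distrib, ← Finset.sum_sub_distrib]
  rw [intervalIntegral.integral_finsetSum]
  · exact Finset.sum_congr rfl fun i _ => key i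
  · intro i _
    exact ((coord_int hw' i).mul_continuousOn (hc z hzc i)).add
      ((coord_int hz' i).continuousOn_mul (hc w hwc i))

theorem h1_dich {n : ℕ} {a b : ℝ} (hab : a < b) {w w' : ℝ → EE n} (h : InH1 a b w w') :
    IntervalIntegrable w' volume a b ∨ ∀ x ∈ Icc a b, w x = w a := by
  by_cases hi : IntervalIntegrable w' volume a b
  · exact Or.inl hi
  right
  obtain ⟨_, _, h3⟩ := h
  have ha := left_mem_Icc.2 hab.le
  have hb := right_mem_Icc.2 hab.le
  intro x hx
  by_cases h4 : IntervalIntegrable w' volume a x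
  · have h5 : ¬ IntervalIntegrable w' volume x b := fun h5 => hi (h4.trans h5)
    have h6 := h3 x hx b hb
    have h7 := h3 a ha b hb
    rw [intervalIntegral.integral_undef h5] at h6
    rw [intervalIntegral.integral_undef hi] at h7
    rw [← sub_eq_zero.1 h6, ← sub_eq_zero.1 h7]
  · have h6 := h3 a ha x hx
    rw [intervalIntegral.integral_undef h4] at h6
    exact sub_eq_zero.1 h6

theorem ii_iff {E : Type*} [NormedAddCommGroup E] {a b : ℝ} (hab : a ≤ b) {w : ℝ → E} :
    IntervalIntegrable w volume a b ↔ IntegrableOn w (Ioo a b) := by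
  rw [intervalIntegrable_iff_integrableOn_Ioo_of_le hab]

theorem ii_eq {E : Type*} [NormedAddCommGroup E] [NormedSpace ℝ E] {a b : ℝ} (hab : a ≤ b) {w : ℝ → E} :
    ∫ x in Ioo a b, w x = ∫ x in a..b, w x := by
  rw [intervalIntegral.integral_of_le hab, integral_Ioc_eq_integral_Ioo]

theorem co_int {E : Type*} [NormedAddCommGroup E] {a b : ℝ} {w : ℝ → E}
    (h : ContinuousOn w (Icc a b)) : IntegrableOn w (Ioo a b) :=
  (h.integrableOn_compact isCompact_Icc).mono_set Ioo_subset_Icc_self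

theorem sqrt_int {a b ε : ℝ} {g : ℝ → ℝ} (h : IntegrableOn (fun x => g x ^ 2) (Ioo a b)) :
    IntegrableOn (fun x => Real.sqrt (g x ^ 2 + ε ^ 2)) (Ioo a b) := by
  have h2 : IntegrableOn (fun x => g x ^ 2 + ε ^ 2 + 1) (Ioo a b) :=
    (h.add (integrable_const (ε ^ 2))).add (integrable_const (1:ℝ))
  refine Integrable.mono' h2 ?_ ?_
  · exact Real.continuous_sqrt.comp_aestronglyMeasurable
      (h.aestronglyMeasurable.add aestronglyMeasurable_const)
  · refine Eventually.of_forall fun x => ?_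
    rw [Real.norm_of_nonneg (Real.sqrt_nonneg _), Real.sqrt_le_left (by positivity)]
    nlinarith [sq_nonneg (g x), sq_nonneg ε, sq_nonneg (g x ^ 2 + ε ^ 2)]

theorem energy_split {n : ℕ} {a b lam ε : ℝ} {f w w' : ℝ → EE n}
    (hf : ContinuousOn f (Icc a b)) (hc : ContinuousOn w (Icc a b))
    (hi : IntegrableOn (fun x => ‖w' x‖ ^ 2) (Ioo a b)) :
    IntegrableOn (fun x => (1 / (2 * lam)) * ‖w x - f x‖ ^ 2
    + Real.sqrt (‖w' x‖ ^ 2 + ε ^ 2) + (ε ^ 2 / 2) * ‖w' x‖ ^ 2) (Ioo a b) ∧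
    regEnergy lam ε a b f w w' = (∫ x in Ioo a b, (1 / (2 * lam)) * ‖w x - f x‖ ^ 2)
      + (∫ x in Ioo a b, Real.sqrt (‖w' x‖ ^ 2 + ε ^ 2)) + (ε ^ 2 / 2) * ∫ x in Ioo a b, ‖w' x‖ ^ 2 := by
  have hA : IntegrableOn (fun x => (1 / (2 * lam)) * ‖w x - f x‖ ^ 2) (Ioo a b) :=
    co_int (continuousOn_const.mul ((hc.sub hf).norm.pow 2))
  have hS := sqrt_int (ε := ε) hi
  have hB := hi.const_mul (ε ^ 2 / 2)
  refine ⟨(hA.add hS).add hB, ?_⟩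
  unfold regEnergy
  rw [← integral_const_mul, ← integral_add hA hS]
  exact integral_add (hA.add hS) hB

theorem min_ii {n : ℕ} {a b lam ε : ℝ} (hab : a < b) (hε : 0 < ε) {f u u' : ℝ → EE n}
    (hf : ContinuousOn f (Icc a b)) (h : IsMinimizerEps lam ε a b f u u') :
    IntervalIntegrable u' volume a b := by
  rcases h1_dich hab h.1 with h1 | h1
  · exact h1
  obtain ⟨⟨hc, hi, _⟩, hm⟩ := h
  have hz : InH1 a b u (fun _ => 0) := by
    refine ⟨hc, by simp, fun x hx y hy => ?_⟩
    rw [h1 x hx, h1 y hy]; simp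
  have h2 := hm _ _ hz
  have hS := sqrt_int (ε := ε) hi
  have hS0 := sqrt_int (ε := ε) (a := a) (b := b) (g := fun _ => ‖(0 : EE n)‖) (by simp)
  rw [(energy_split hf hc hi).2, (energy_split hf hc hz.2.1).2] at h2
  have h3 : ∫ x in Ioo a b, √(‖(0 : EE n)‖ ^ 2 + ε ^ 2) ≤ ∫ x in Ioo a b, √(‖u' x‖ ^ 2 + ε ^ 2) := by
    apply integral_mono hS0 hS
    intro x
    apply Real.sqrt_le_sqrt
    simp
  have h4 : (ε ^ 2 / 2) * ∫ x in Ioo a b, ‖(0 : EE n)‖ ^ 2 = 0 := by simp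
  have h5 : ∫ x in Ioo a b, ‖u' x‖ ^ 2 ≤ 0 := by
    have : 0 < ε ^ 2 / 2 := by positivity
    by_contra hh
    push Not at hh
    have := mul_pos this hh
    linarith
  have h6 : ∫ x in Ioo a b, ‖u' x‖ ^ 2 = 0 := le_antisymm h5 (integral_nonneg fun x => by positivity)
  rw [integral_eq_zero_iff_of_nonneg (fun x => by positivity) hi] at h6
  rw [ii_iff hab.le]
  apply (integrable_zero ℝ (EE n) (volume.restrict (Ioo a b))).congr
  filter_upwards [h6] with x hx
  have hx2 : ‖u' x‖ ^ 2 = 0 := hx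
  have hx3 : u' x = 0 := by simpa using hx2
  rw [hx3]
  rfl

theorem sq_int1 {n : ℕ} {a b : ℝ} {w : ℝ → EE n}
    (hm : AEStronglyMeasurable w (volume.restrict (Ioo a b)))
    (h : IntegrableOn (fun x => ‖w x‖ ^ 2) (Ioo a b)) : IntegrableOn w (Ioo a b) := by
  have h2 : IntegrableOn (fun x => ‖w x‖ ^ 2 + 1) (Ioo a b) := h.add (integrable_const (1:ℝ))
  refine Integrable.mono' h2 hm (Eventually.of_forall fun x => ?_)
  nlinarith [sq_nonneg (‖w x‖ - 1)]

theorem inner_int {n : ℕ} {a b : ℝ} {w z : ℝ → EE n}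
    (hwm : AEStronglyMeasurable w (volume.restrict (Ioo a b)))
    (hw : IntegrableOn (fun x => ‖w x‖ ^ 2) (Ioo a b))
    (hzm : AEStronglyMeasurable z (volume.restrict (Ioo a b)))
    (hz : IntegrableOn (fun x => ‖z x‖ ^ 2) (Ioo a b)) :
    IntegrableOn (fun x => inner ℝ (w x) (z x)) (Ioo a b) := by
  refine Integrable.mono' (hw.add hz) (hwm.inner hzm) (Eventually.of_forall fun x => ?_)
  have := norm_inner_le_norm (𝕜 := ℝ) (w x) (z x)
  simp only [Pi.add_apply]
  nlinarith [sq_nonneg (‖w x‖ - ‖z x‖)]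

theorem sq_add {n : ℕ} {a b : ℝ} {w z : ℝ → EE n} (c : ℝ)
    (hwm : AEStronglyMeasurable w (volume.restrict (Ioo a b)))
    (hw : IntegrableOn (fun x => ‖w x‖ ^ 2) (Ioo a b))
    (hzm : AEStronglyMeasurable z (volume.restrict (Ioo a b)))
    (hz : IntegrableOn (fun x => ‖z x‖ ^ 2) (Ioo a b)) :
    IntegrableOn (fun x => ‖w x + c • z x‖ ^ 2) (Ioo a b) := by
  refine Integrable.mono' ((hw.const_mul 2).add (hz.const_mul (2 * c ^ 2)))
    ((hwm.add (hzm.const_smul c)).norm.pow 2) (Eventually.of_forall fun x => ?_)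
  have h1 := norm_add_le (w x) (c • z x)
  rw [norm_smul, Real.norm_eq_abs] at h1
  rw [Real.norm_of_nonneg (by positivity)]
  have h2 : ‖w x + c • z x‖ ^ 2 ≤ (‖w x‖ + |c| * ‖z x‖) ^ 2 := by gcongr
  have h3 : (|c| * ‖z x‖) ^ 2 = c ^ 2 * ‖z x‖ ^ 2 := by rw [mul_pow, sq_abs]
  simp only [Pi.add_apply]
  nlinarith [sq_nonneg (‖w x‖ - |c| * ‖z x‖)]

/-- regularised norm -/
def sn {n : ℕ} (ε : ℝ) (q : EE n) : ℝ := Real.sqrt (‖q‖ ^ 2 + ε ^ 2)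

/-- gradient of the regularised integrand -/
def Ph {n : ℕ} (ε : ℝ) (q : EE n) : EE n := (1 / sn ε q + ε ^ 2) • q

theorem sn_ge {n : ℕ} {ε : ℝ} (_hε : 0 < ε) (q : EE n) : ε ≤ sn ε q := by
  apply Real.le_sqrt_of_sq_le
  nlinarith [sq_nonneg ‖q‖]

theorem sn_pos {n : ℕ} {ε : ℝ} (hε : 0 < ε) (q : EE n) : 0 < sn ε q := hε.trans_le (sn_ge hε q)

theorem sn_sq {n : ℕ} (ε : ℝ) (q : EE n) : sn ε q ^ 2 = ‖q‖ ^ 2 + ε ^ 2 :=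
  Real.sq_sqrt (by positivity)

theorem sn_cont {n : ℕ} (ε : ℝ) : Continuous (sn (n := n) ε) := by
  unfold sn; fun_prop

theorem Ph_cont {n : ℕ} {ε : ℝ} (hε : 0 < ε) : Continuous (Ph (n := n) ε) := by
  unfold Ph
  exact ((continuous_const.div (sn_cont ε) fun q => (sn_pos hε q).ne').add continuous_const).smul continuous_id

theorem sn_tangent {n : ℕ} {ε : ℝ} (hε : 0 < ε) (q v : EE n) (t : ℝ) :
    sn ε (q + t • v) ≤ sn ε q + t * (1 / sn ε q * inner ℝ q v) + t ^ 2 * (1 / (2 * ε) * ‖v‖ ^ 2) := by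
  have hs := sn_pos hε q
  have hs' := sn_pos hε (q + t • v)
  have h1 : sn ε (q + t • v) ^ 2 = sn ε q ^ 2 + 2 * t * inner ℝ q v + t ^ 2 * ‖v‖ ^ 2 := by
    rw [sn_sq, sn_sq, norm_add_sq_real, inner_smul_right, norm_smul, mul_pow, Real.norm_eq_abs, sq_abs]
    ring
  have h2 : sn ε (q + t • v) ≤ sn ε q + t * (1 / sn ε q * inner ℝ q v) + t ^ 2 * (1 / (2 * sn ε q) * ‖v‖ ^ 2) := by
    have : sn ε q + t * (1 / sn ε q * inner ℝ q v) + t ^ 2 * (1 / (2 * sn ε q) * ‖v‖ ^ 2) =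
      (sn ε (q + t • v) ^ 2 + sn ε q ^ 2) / (2 * sn ε q) := by
      rw [h1]; field_simp; ring
    rw [this, le_div_iff₀ (by positivity)]
    nlinarith [sq_nonneg (sn ε (q + t • v) - sn ε q)]
  have h3 : 1 / (2 * sn ε q) ≤ 1 / (2 * ε) := by
    apply one_div_le_one_div_of_le (by positivity); linarith [sn_ge hε q]
  have : t ^ 2 * (1 / (2 * sn ε q) * ‖v‖ ^ 2) ≤ t ^ 2 * (1 / (2 * ε) * ‖v‖ ^ 2) := by gcongr
  linarith

theorem Ph_norm {n : ℕ} {ε : ℝ} (hε : 0 < ε) (q : EE n) : ‖Ph ε q‖ ≤ (1 / ε + ε ^ 2) * ‖q‖ := by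
  unfold Ph
  rw [norm_smul, Real.norm_of_nonneg (by have := sn_pos hε q; positivity)]
  gcongr
  exact sn_ge hε q

theorem Ph_sq_int {n : ℕ} {a b ε : ℝ} (hε : 0 < ε) {w : ℝ → EE n}
    (hwm : AEStronglyMeasurable w (volume.restrict (Ioo a b)))
    (hw : IntegrableOn (fun x => ‖w x‖ ^ 2) (Ioo a b)) :
    AEStronglyMeasurable (fun x => Ph ε (w x)) (volume.restrict (Ioo a b)) ∧
    IntegrableOn (fun x => ‖Ph ε (w x)‖ ^ 2) (Ioo a b) := by
  have h := (Ph_cont hε).comp_aestronglyMeasurable hwm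
  refine ⟨h, ?_⟩
  refine Integrable.mono' (hw.const_mul ((1 / ε + ε ^ 2) ^ 2)) (h.norm.pow 2) (Eventually.of_forall fun x => ?_)
  rw [Real.norm_of_nonneg (by positivity), ← mul_pow]
  have := Ph_norm hε (w x)
  gcongr

theorem lin_zero {L C : ℝ} (h : ∀ t : ℝ, 0 ≤ t * L + t ^ 2 * C) : L = 0 := by
  have hC : 0 < |C| + 1 := by positivity
  have h1 := h (-(L / (|C| + 1)) / 2)
  have h2 : (-(L / (|C| + 1)) / 2) * L + (-(L / (|C| + 1)) / 2) ^ 2 * C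
      = (L / (|C| + 1)) ^ 2 * (C / 4 - (|C| + 1) / 2) := by field_simp; ring
  rw [h2] at h1
  have h3 : C / 4 - (|C| + 1) / 2 < 0 := by linarith [le_abs_self C, abs_nonneg C]
  by_contra hL
  have : 0 < (L / (|C| + 1)) ^ 2 := by positivity
  nlinarith

theorem weak_EL {n : ℕ} {a b lam ε : ℝ} (hab : a < b) (hε : 0 < ε) (hlam : 0 < lam) {f u u' v v' : ℝ → EE n}
    (hf : ContinuousOn f (Icc a b)) (h : IsMinimizerEps lam ε a b f u u')
    (hv : InH1 a b v v') (hvi : IntervalIntegrable v' volume a b) :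
    ∫ x in Ioo a b, (inner ℝ ((1 / lam) • (u x - f x)) (v x) + inner ℝ (Ph ε (u' x)) (v' x)) = 0 := by
  have hui := min_ii hab hε hf h
  obtain ⟨⟨huc, hu2, hu3⟩, hm⟩ := h
  obtain ⟨hvc, hv2, hv3⟩ := hv
  have hum := ((ii_iff hab.le).1 hui).aestronglyMeasurable
  have hvm := ((ii_iff hab.le).1 hvi).aestronglyMeasurable
  set ℓ : ℝ → ℝ := fun x => inner ℝ ((1 / lam) • (u x - f x)) (v x) + inner ℝ (Ph ε (u' x)) (v' x) with hℓ
  set C : ℝ → ℝ := fun x => 1 / (2 * lam) * ‖v x‖ ^ 2 + (1 / (2 * ε) + ε ^ 2 / 2) * ‖v' x‖ ^ 2 with hC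
  have hP := Ph_sq_int hε hum hu2
  have hℓi : IntegrableOn ℓ (Ioo a b) :=
    (co_int (((huc.sub hf).const_smul (1 / lam)).inner hvc)).add (inner_int hP.1 hP.2 hvm hv2)
  have hCi : IntegrableOn C (Ioo a b) :=
    (co_int (continuousOn_const.mul (hvc.norm.pow 2))).add (hv2.const_mul _)
  apply lin_zero (C := ∫ x in Ioo a b, C x)
  intro t
  have hH : InH1 a b (fun x => u x + t • v x) (fun x => u' x + t • v' x) := by
    refine ⟨huc.add (hvc.const_smul t), sq_add t hum hu2 hvm hv2, fun x hx y hy => ?_⟩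
    have hvt : IntervalIntegrable (fun x => t • v' x) volume x y := (ii_mono hvi hab.le hx hy).smul t
    rw [intervalIntegral.integral_add (ii_mono hui hab.le hx hy) hvt,
      intervalIntegral.integral_smul, ← hu3 x hx y hy, ← hv3 x hx y hy]
    module
  have h1 := hm _ _ hH
  have hj := (energy_split (lam := lam) (ε := ε) hf huc hu2).1
  have hjt := (energy_split (lam := lam) (ε := ε) hf hH.1 hH.2.1).1
  have h2 : regEnergy lam ε a b f (fun x => u x + t • v x) (fun x => u' x + t • v' x) ≤
      regEnergy lam ε a b f u u' + t * (∫ x in Ioo a b, ℓ x) + t ^ 2 * ∫ x in Ioo a b, C x := by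
    rw [← integral_const_mul, ← integral_const_mul]
    unfold regEnergy
    rw [← integral_add hj (hℓi.const_mul t)]
    have hjj : IntegrableOn (fun x => (1 / (2 * lam)) * ‖u x - f x‖ ^ 2
      + Real.sqrt (‖u' x‖ ^ 2 + ε ^ 2) + (ε ^ 2 / 2) * ‖u' x‖ ^ 2 + t * ℓ x) (Ioo a b) := hj.add (hℓi.const_mul t)
    rw [← integral_add hjj (hCi.const_mul (t ^ 2))]
    apply integral_mono hjt (hjj.add (hCi.const_mul (t ^ 2)))
    intro x
    have e1 := sn_tangent hε (u' x) (v' x) t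
    have e2 : ‖u' x + t • v' x‖ ^ 2 = ‖u' x‖ ^ 2 + 2 * t * inner ℝ (u' x) (v' x) + t ^ 2 * ‖v' x‖ ^ 2 := by
      rw [norm_add_sq_real, inner_smul_right, norm_smul, mul_pow, Real.norm_eq_abs, sq_abs]
      ring
    have e3 : ‖u x + t • v x - f x‖ ^ 2 = ‖u x - f x‖ ^ 2 + 2 * t * inner ℝ (u x - f x) (v x) + t ^ 2 * ‖v x‖ ^ 2 := by
      rw [add_sub_right_comm, norm_add_sq_real, inner_smul_right, norm_smul, mul_pow, Real.norm_eq_abs, sq_abs]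
      ring
    have e4 : ℓ x = 1 / lam * inner ℝ (u x - f x) (v x) + (1 / sn ε (u' x) + ε ^ 2) * inner ℝ (u' x) (v' x) := by
      simp only [hℓ, Ph, real_inner_smul_left]
    change 1 / (2 * lam) * ‖u x + t • v x - f x‖ ^ 2 + sn ε (u' x + t • v' x)
      + ε ^ 2 / 2 * ‖u' x + t • v' x‖ ^ 2 ≤ 1 / (2 * lam) * ‖u x - f x‖ ^ 2
      + sn ε (u' x) + (ε ^ 2 / 2) * ‖u' x‖ ^ 2 + t * ℓ x + t ^ 2 * C x
    rw [e2, e3, e4, hC]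
    have e5 : 1 / (2 * lam) * (2 * t * inner ℝ (u x - f x) (v x)) = t * (1 / lam * inner ℝ (u x - f x) (v x)) := by
      field_simp
    linarith
  linarith

theorem prim_inH1 {n : ℕ} {a b : ℝ} (hab : a < b) {z' : ℝ → EE n} (c : EE n)
    (hi : IntervalIntegrable z' volume a b)
    (h2 : IntegrableOn (fun x => ‖z' x‖ ^ 2) (Ioo a b)) :
    InH1 a b (fun x => c + ∫ t in a..x, z' t) z' := by
  refine ⟨?_, h2, ?_⟩
  · apply continuousOn_const.add
    have := intervalIntegral.continuousOn_primitive_interval (a := a) (b := b) (f := z') (μ := volume)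
      (by rw [uIcc_of_le hab.le]; exact (intervalIntegrable_iff_integrableOn_Icc_of_le hab.le).1 hi)
    rwa [uIcc_of_le hab.le] at this
  · intro x hx y hy
    have ha := left_mem_Icc.2 hab.le
    simp only [add_sub_add_left_eq_sub]
    rw [intervalIntegral.integral_interval_sub_left (ii_mono hi hab.le ha hy) (ii_mono hi hab.le ha hx)]

theorem EL {n : ℕ} {a b lam ε : ℝ} (hab : a < b) (hε : 0 < ε) (hlam : 0 < lam) {f u u' : ℝ → EE n}
    (hf : ContinuousOn f (Icc a b)) (h : IsMinimizerEps lam ε a b f u u') :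
    (∫ x in a..b, (1 / lam) • (u x - f x)) = 0 ∧
    ∀ᵐ x ∂(volume.restrict (Ioo a b)), Ph ε (u' x) = ∫ t in a..x, (1 / lam) • (u t - f t) := by
  set g : ℝ → EE n := fun x => (1 / lam) • (u x - f x) with hg
  have hgc : ContinuousOn g (Icc a b) := (h.1.1.sub hf).const_smul (1 / lam)
  have hgi : IntervalIntegrable g volume a b := (ii_iff hab.le).2 (co_int hgc)
  have hb : (∫ x in a..b, g x) = 0 := by
    have h0 : ∀ c : EE n, ∫ x in Ioo a b, inner ℝ c (g x) = 0 := by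
      intro c
      have := weak_EL (v := fun _ => c) (v' := fun _ => 0) hab hε hlam hf h
        ⟨continuousOn_const, by simp, by simp⟩ (by simp)
      simpa [real_inner_comm, hg] using this
    rw [← ii_eq hab.le]
    exact integral_eq_zero_of_forall_integral_inner_eq_zero (𝕜 := ℝ) _ (co_int hgc) h0
  refine ⟨hb, ?_⟩
  have hui := min_ii hab hε hf h
  have hum := ((ii_iff hab.le).1 hui).aestronglyMeasurable
  have hP := Ph_sq_int hε hum h.1.2.1
  set σ : ℝ → EE n := fun x => ∫ t in a..x, g t with hσ
  have hσH := prim_inH1 hab 0 hgi (co_int (hgc.norm.pow 2))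
  simp only [zero_add] at hσH
  have hσc : ContinuousOn σ (Icc a b) := hσH.1
  have hσm := (co_int hσc).aestronglyMeasurable
  set z' : ℝ → EE n := fun x => Ph ε (u' x) + (-1 : ℝ) • σ x with hz'
  have hzm : AEStronglyMeasurable z' (volume.restrict (Ioo a b)) :=
    hP.1.add (hσm.const_smul (-1 : ℝ))
  have hz2 : IntegrableOn (fun x => ‖z' x‖ ^ 2) (Ioo a b) := sq_add _ hP.1 hP.2 hσm (co_int (hσc.norm.pow 2))
  have hzi : IntervalIntegrable z' volume a b := (ii_iff hab.le).2 (sq_int1 hzm hz2)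
  have hzH := prim_inH1 hab 0 hzi hz2
  simp only [zero_add] at hzH
  have e1 := weak_EL hab hε hlam hf h hzH hzi
  have e2 := ibp hab.le (w := σ) (z := fun x => ∫ t in a..x, z' t) hgi hzi (by simp [hσ]) (by simp) hσc hzH.1
  rw [← ii_eq hab.le] at e2
  simp only [intervalIntegral.integral_same, inner_zero_right, sub_zero] at e2
  rw [show σ b = 0 from hb, inner_zero_left] at e2
  have i1 : IntegrableOn (fun x => inner ℝ (g x) (∫ t in a..x, z' t)) (Ioo a b) := co_int (hgc.inner hzH.1)
  have e3 : ∫ x in Ioo a b, ‖z' x‖ ^ 2 = 0 := by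
    rw [← sub_eq_zero.2 (e1.trans e2.symm), ← integral_sub]
    · congr 1; ext x
      rw [← real_inner_self_eq_norm_sq]
      nth_rewrite 1 [hz']
      simp only [inner_add_left, real_inner_smul_left, hg]
      ring
    · exact i1.add (inner_int hP.1 hP.2 hzm hz2)
    · exact i1.add (inner_int hσm (co_int (hσc.norm.pow 2)) hzm hz2)
  rw [integral_eq_zero_iff_of_nonneg (fun x => by positivity) hz2] at e3
  filter_upwards [e3] with x hx
  have : z' x = 0 := by simpa using hx
  rw [hz'] at this
  simp only [neg_smul, one_smul] at this
  exact eq_of_sub_eq_zero (by rw [sub_eq_add_neg]; exact this)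

theorem sn_cs {n : ℕ} {ε : ℝ} (hε : 0 < ε) (q r : EE n) : inner ℝ q r + ε ^ 2 ≤ sn ε q * sn ε r := by
  have h1 := real_inner_le_norm q r
  have h2 : ‖q‖ * ‖r‖ + ε ^ 2 ≤ sn ε q * sn ε r := by
    apply (pow_le_pow_iff_left₀ (by positivity)  (by have := sn_pos hε q; have := sn_pos hε r; positivity) two_ne_zero).1
    rw [mul_pow, sn_sq, sn_sq]
    nlinarith [sq_nonneg (ε * (‖q‖ - ‖r‖))]
  linarith

theorem Ph_mono {n : ℕ} {ε : ℝ} (hε : 0 < ε) (q r : EE n) :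
    ε ^ 2 * ‖q - r‖ ^ 2 ≤ inner ℝ (Ph ε q - Ph ε r) (q - r) := by
  have hs := sn_pos hε q
  have ht := sn_pos hε r
  have h := sn_cs hε q r
  have hq := sn_sq ε q
  have hr := sn_sq ε r
  have e : inner ℝ (Ph ε q - Ph ε r) (q - r) = ε ^ 2 * ‖q - r‖ ^ 2 +
      ((sn ε q - (inner ℝ q r + ε ^ 2) / sn ε q) + (sn ε r - (inner ℝ q r + ε ^ 2) / sn ε r)) := by
    rw [norm_sub_sq_real]
    simp only [Ph, inner_sub_left, inner_sub_right, real_inner_smul_left, real_inner_self_eq_norm_sq,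
      real_inner_comm q r]
    rw [show ‖q‖ ^ 2 = sn ε q ^ 2 - ε ^ 2 by linarith, show ‖r‖ ^ 2 = sn ε r ^ 2 - ε ^ 2 by linarith]
    field_simp
    ring
  rw [e]
  have h1 : (inner ℝ q r + ε ^ 2) / sn ε q ≤ sn ε r := by rw [div_le_iff₀ hs]; linarith
  have h2 : (inner ℝ q r + ε ^ 2) / sn ε r ≤ sn ε q := by rw [div_le_iff₀ ht]; linarith
  linarith

theorem Ph_anti {n : ℕ} {ε : ℝ} (hε : 0 < ε) (q r : EE n) :
    ‖q - r‖ ≤ (1 / ε ^ 2) * ‖Ph ε q - Ph ε r‖ := by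
  have h1 := Ph_mono hε q r
  have h2 := real_inner_le_norm (Ph ε q - Ph ε r) (q - r)
  have hε2 : 0 < ε ^ 2 := by positivity
  rw [one_div, ← div_eq_inv_mul, le_div_iff₀ hε2]
  rcases eq_or_lt_of_le (norm_nonneg (q - r)) with h | h
  · rw [← h]; simp
  · nlinarith

theorem Ph_surj {n : ℕ} {ε : ℝ} (hε : 0 < ε) : Function.Surjective (Ph (n := n) ε) := by
  intro y
  by_cases hy : y = 0
  · exact ⟨0, by simp [Ph, hy]⟩
  have hy' : 0 < ‖y‖ := norm_pos_iff.2 hy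
  -- scalar equation along the ray
  set φ : ℝ → ℝ := fun t => (1 / sn ε (t • y) + ε ^ 2) * t with hφ
  have hc : Continuous φ := by
    apply Continuous.mul _ continuous_id
    exact (continuous_const.div ((sn_cont ε).comp (by fun_prop)) fun t => (sn_pos hε _).ne').add continuous_const
  have hε2 : 0 < ε ^ 2 := by positivity
  have h0 : φ 0 ≤ 1 := by simp [hφ]
  have h1 : 1 ≤ φ (1 / ε ^ 2) := by
    simp only [hφ]
    have := sn_pos hε ((1 / ε ^ 2) • y)
    rw [add_mul]
    have h3 : ε ^ 2 * (1 / ε ^ 2) = 1 := by field_simp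
    have h4 : 0 ≤ 1 / sn ε ((1 / ε ^ 2) • y) * (1 / ε ^ 2) := by positivity
    linarith
  obtain ⟨t, _, ht⟩ := intermediate_value_Icc (by positivity : (0:ℝ) ≤ 1 / ε ^ 2) hc.continuousOn ⟨h0, h1⟩
  refine ⟨t • y, ?_⟩
  unfold Ph
  rw [smul_smul]
  change φ t • y = y
  rw [ht, one_smul]

/-- derivative of `Ph` -/
def DPh {n : ℕ} (ε : ℝ) (q : EE n) : (EE n) →L[ℝ] (EE n) :=
  (1 / sn ε q + ε ^ 2) • ContinuousLinearMap.id ℝ (EE n)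
    - (1 / sn ε q ^ 3) • (innerSL ℝ q).smulRight q

/-- inverse of the derivative of `Ph` -/
def DPhi {n : ℕ} (ε : ℝ) (q : EE n) : (EE n) →L[ℝ] (EE n) :=
  (1 / (1 / sn ε q + ε ^ 2)) • (ContinuousLinearMap.id ℝ (EE n)
    + ((1 / sn ε q ^ 3) / (ε ^ 2 + ε ^ 2 / sn ε q ^ 3)) • (innerSL ℝ q).smulRight q)

theorem DPh_apply {n : ℕ} (ε : ℝ) (q v : EE n) :
    DPh ε q v = (1 / sn ε q + ε ^ 2) • v - (1 / sn ε q ^ 3 * inner ℝ q v) • q := by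
  simp [DPh, smul_smul]

theorem DPhi_apply {n : ℕ} (ε : ℝ) (q v : EE n) :
    DPhi ε q v = (1 / (1 / sn ε q + ε ^ 2)) •
      (v + ((1 / sn ε q ^ 3) / (ε ^ 2 + ε ^ 2 / sn ε q ^ 3) * inner ℝ q v) • q) := by
  simp [DPhi, smul_smul, mul_assoc]

theorem DPh_inner {n : ℕ} {ε : ℝ} (hε : 0 < ε) (q v : EE n) :
    inner ℝ q (DPh ε q v) = (ε ^ 2 + ε ^ 2 / sn ε q ^ 3) * inner ℝ q v := by
  have hs := sn_pos hε q
  have hq := sn_sq ε q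
  rw [DPh_apply, inner_sub_right, inner_smul_right, inner_smul_right, real_inner_self_eq_norm_sq,
    show ‖q‖ ^ 2 = sn ε q ^ 2 - ε ^ 2 by linarith]
  field_simp
  ring

theorem DPh_left {n : ℕ} {ε : ℝ} (hε : 0 < ε) (q : EE n) : Function.LeftInverse (DPhi ε q) (DPh ε q) := by
  intro v
  have hs := sn_pos hε q
  rw [DPhi_apply, DPh_inner hε, DPh_apply]
  have hA : 1 / sn ε q + ε ^ 2 ≠ 0 := by positivity
  have e : 1 / sn ε q ^ 3 / (ε ^ 2 + ε ^ 2 / sn ε q ^ 3) * ((ε ^ 2 + ε ^ 2 / sn ε q ^ 3) * inner ℝ q v)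
    = 1 / sn ε q ^ 3 * inner ℝ q v := by
    rw [← mul_assoc, div_mul_cancel₀]
    positivity
  rw [e, sub_add_cancel, smul_smul, one_div_mul_cancel hA, one_smul]

theorem sn_deriv {n : ℕ} {ε : ℝ} (hε : 0 < ε) (q : EE n) :
    HasFDerivAt (sn ε) ((1 / sn ε q) • innerSL ℝ q) q := by
  have h1 : HasFDerivAt (fun x : EE n => ‖x‖ ^ 2 + ε ^ 2) (2 • innerSL ℝ q) q :=
    (hasStrictFDerivAt_norm_sq q).hasFDerivAt.add_const _
  have h2 := h1.sqrt (by positivity)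
  have e : (1 / sn ε q) • innerSL ℝ q = (1 / (2 * √(‖q‖ ^ 2 + ε ^ 2))) • 2 • (innerSL ℝ) q := by
    rw [two_nsmul, ← two_smul ℝ, smul_smul]
    congr 1
    have := sn_pos hε q
    change 1 / sn ε q = 1 / (2 * sn ε q) * 2
    field_simp
  rw [e]
  exact h2

theorem Ph_deriv {n : ℕ} {ε : ℝ} (hε : 0 < ε) (q : EE n) : HasFDerivAt (Ph ε) (DPh ε q) q := by
  have hs := sn_pos hε q
  have h1 : HasFDerivAt (fun x : EE n => (sn ε x)⁻¹ + ε ^ 2) (-(sn ε q ^ 2)⁻¹ • ((1 / sn ε q) • innerSL ℝ q)) q :=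
    ((hasDerivAt_inv hs.ne').comp_hasFDerivAt q (sn_deriv hε q)).add_const _
  have h2 := h1.smul (hasFDerivAt_id q)
  have e : Ph ε = fun x : EE n => ((sn ε x)⁻¹ + ε ^ 2) • id x := by
    ext1 x; simp [Ph]
  rw [e]
  refine HasFDerivAt.congr_fderiv h2 ?_
  ext1 v
  rw [DPh_apply]
  simp only [add_apply, smul_apply, ContinuousLinearMap.smulRight_apply,
    innerSL_apply_apply, smul_eq_mul, id, ContinuousLinearMap.id_apply]
  rw [sub_eq_add_neg, ← neg_smul]
  congr 2
  · rw [one_div]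
  · field_simp

theorem regularity {n : ℕ} {a b lam ε : ℝ} (hab : a < b) (hε : 0 < ε) (hlam : 0 < lam) {f u u' : ℝ → EE n}
    (hf : ContinuousOn f (Icc a b)) (h : IsMinimizerEps lam ε a b f u u') :
    ∃ q q' : ℝ → EE n, ContinuousOn q (Icc a b) ∧ ContinuousOn q' (Icc a b) ∧ q a = 0 ∧ q b = 0 ∧
      (∀ᵐ x ∂(volume.restrict (Ioo a b)), u' x = q x) ∧
      ∀ x ∈ Ioo a b, HasDerivAt q (q' x) x ∧ (1 / lam) • (u x - f x) = DPh ε (q x) (q' x) := by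
  obtain ⟨hb, hae⟩ := EL hab hε hlam hf h
  set g : ℝ → EE n := fun x => (1 / lam) • (u x - f x) with hg
  have hgc : ContinuousOn g (Icc a b) := (h.1.1.sub hf).const_smul (1 / lam)
  have hgi : IntervalIntegrable g volume a b := (ii_iff hab.le).2 (co_int hgc)
  have hσH := prim_inH1 hab 0 hgi (co_int (hgc.norm.pow 2))
  simp only [zero_add] at hσH
  obtain ⟨Q, hQ⟩ := (Ph_surj (n := n) hε).hasRightInverse
  have hQL : LipschitzWith (Real.toNNReal (1 / ε ^ 2)) Q := by
    apply LipschitzWith.of_dist_le_mul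
    intro x y
    rw [dist_eq_norm, dist_eq_norm, Real.coe_toNNReal _ (by positivity)]
    have := Ph_anti hε (Q x) (Q y)
    rwa [hQ, hQ] at this
  have hP0 : Ph ε (0 : EE n) = 0 := by simp [Ph]
  have hQP : ∀ q, Q (Ph ε q) = q := by
    intro q
    have := Ph_anti hε (Q (Ph ε q)) q
    rw [hQ, sub_self, norm_zero, mul_zero] at this
    exact sub_eq_zero.1 (norm_le_zero_iff.1 this)
  have hQ0 : Q 0 = 0 := by rw [← hP0, hQP, hP0]
  set q : ℝ → EE n := fun x => Q (∫ t in a..x, g t) with hq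
  have hqc : ContinuousOn q (Icc a b) := hQL.continuous.comp_continuousOn hσH.1
  refine ⟨q, fun x => DPhi ε (q x) (g x), hqc, ?_, ?_, ?_, ?_, ?_⟩
  · have hsc : ContinuousOn (fun x => sn ε (q x)) (Icc a b) := (sn_cont ε).comp_continuousOn hqc
    have hsp : ∀ x, 0 < sn ε (q x) := fun x => sn_pos hε _
    simp only [DPhi_apply]
    have hs3 : ContinuousOn (fun x => 1 / sn ε (q x) ^ 3) (Icc a b) :=
      continuousOn_const.div (hsc.pow 3) fun x _ => by have := hsp x; positivity
    have hs4 : ContinuousOn (fun x => ε ^ 2 / sn ε (q x) ^ 3) (Icc a b) :=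
      continuousOn_const.div (hsc.pow 3) fun x _ => by have := hsp x; positivity
    apply ContinuousOn.fun_smul
    · apply continuousOn_const.div
      · exact (continuousOn_const.div hsc fun x _ => (hsp x).ne').add continuousOn_const
      · intro x _; have := hsp x; positivity
    · apply hgc.fun_add
      apply ContinuousOn.fun_smul _ hqc
      apply ContinuousOn.fun_mul _ (hqc.inner hgc)
      apply hs3.div (continuousOn_const.fun_add hs4)
      intro x _; have := hsp x; positivity
  · simp [hq, hQ0]
  · simp only [hq]; rw [hb, hQ0]
  · filter_upwards [hae] with x hx
    rw [hq]; simp only; rw [← hx, hQP]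
  · intro x hx
    have hgx : ContinuousAt g x := hgc.continuousAt (Icc_mem_nhds hx.1 hx.2)
    have hσ : HasDerivAt (fun x => ∫ t in a..x, g t) (g x) x := by
      apply intervalIntegral.integral_hasDerivAt_right
      · exact ii_mono hgi hab.le (left_mem_Icc.2 hab.le) (Ioo_subset_Icc_self hx)
      · exact ContinuousOn.stronglyMeasurableAtFilter isOpen_Ioo (hgc.mono Ioo_subset_Icc_self) x hx
      · exact hgx
    have hqx : ContinuousAt q x := hqc.continuousAt (Icc_mem_nhds hx.1 hx.2)
    have h1 := HasFDerivAt.of_comp_of_leftInverse (f'symm := DPhi ε (q x)) hqx (Ph_deriv hε (q x))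
      hσ.hasFDerivAt (Eventually.of_forall fun y => hQ _) (DPh_left hε (q x))
    have h2 : HasDerivAt q (DPhi ε (q x) (g x)) x := by
      have := h1.hasDerivAt
      simpa using this
    refine ⟨h2, ?_⟩
    have h3 := (Ph_deriv hε (q x)).comp_hasDerivAt x h2
    have h4 : (Ph ε ∘ q) = fun x => ∫ t in a..x, g t := by ext1 y; exact hQ _
    rw [h4] at h3
    exact hσ.unique h3

theorem ftc {E : Type*} [NormedAddCommGroup E] [NormedSpace ℝ E] [CompleteSpace E] {a b : ℝ}
    {F F' : ℝ → E} (hF : ContinuousOn F (Icc a b)) (hF' : ContinuousOn F' (Icc a b))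
    (hd : ∀ x ∈ Ioo a b, HasDerivAt F (F' x) x) : ∀ x ∈ Icc a b, F x = F a + ∫ t in a..x, F' t := by
  intro x hx
  rw [intervalIntegral.integral_eq_sub_of_hasDerivAt_of_le hx.1 (hF.mono (Icc_subset_Icc_right hx.2))
    (fun y hy => hd y ⟨hy.1, hy.2.trans_le hx.2⟩)]
  · abel
  · apply ContinuousOn.intervalIntegrable
    rw [uIcc_of_le hx.1]
    exact hF'.mono (Icc_subset_Icc_right hx.2)

theorem alg_pos {s Q N k ε p : ℝ} (hs : 0 < s) (hsq : s ^ 2 = Q ^ 2 + ε ^ 2)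
    (hk : k ^ 2 ≤ Q ^ 2 * N ^ 2) (hp : 1 ≤ p) :
    0 ≤ (p - 2) * (ε ^ 2 + ε ^ 2 / s ^ 3) * k ^ 2 / s ^ 2 + ((1 / s + ε ^ 2) * N ^ 2 - 1 / s ^ 3 * k ^ 2) := by
  set e := ε ^ 2 + ε ^ 2 / s ^ 3 with he
  have he0 : 0 ≤ e := by positivity
  have hA : 1 / s + ε ^ 2 = e + Q ^ 2 / s ^ 3 := by
    rw [he, show Q ^ 2 = s ^ 2 - ε ^ 2 by linarith]; field_simp; ring
  rw [hA]
  have h1 : (p - 2) * e * k ^ 2 / s ^ 2 + ((e + Q ^ 2 / s ^ 3) * N ^ 2 - 1 / s ^ 3 * k ^ 2)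
    = (p - 1) * e * k ^ 2 / s ^ 2 + (Q ^ 2 * N ^ 2 - k ^ 2) * (1 / s ^ 3 + e / s ^ 2)
      + e * N ^ 2 * (s ^ 2 - Q ^ 2) / s ^ 2 := by field_simp; ring
  rw [h1]
  have h2 : 0 ≤ p - 1 := by linarith
  have h3 : 0 ≤ Q ^ 2 * N ^ 2 - k ^ 2 := by linarith
  have h4 : 0 ≤ s ^ 2 - Q ^ 2 := by rw [hsq]; nlinarith [sq_nonneg ε]
  positivity

theorem inner_ii {n : ℕ} {a b : ℝ} (hab : a ≤ b) {w z : ℝ → EE n} (hw : IntervalIntegrable w volume a b)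
    (hz : ContinuousOn z (Icc a b)) : IntervalIntegrable (fun x => inner ℝ (w x) (z x)) volume a b := by
  have hm : ∀ i : Fin n, IntervalIntegrable (fun x => w x i * z x i) volume a b := by
    intro i
    apply (coord_int hw i).mul_continuousOn
    rw [uIcc_of_le hab]
    exact (EuclideanSpace.proj (𝕜 := ℝ) i : (EE n) →L[ℝ] ℝ).continuous.comp_continuousOn hz
  have e : (fun x => inner ℝ (w x) (z x)) = ∑ i, fun x => w x i * z x i := by
    ext x
    simp [PiLp.inner_apply, mul_comm]
  rw [e]
  exact IntervalIntegrable.sum _ fun i _ => hm i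

theorem key_ineq {n : ℕ} {a b ε p : ℝ} (hab : a < b) (hε : 0 < ε) (hp1 : 1 < p) (hp2 : p ≤ 2)
    {g g' q q' : ℝ → EE n} (hgc : ContinuousOn g (Icc a b)) (hgi : IntervalIntegrable g' volume a b)
    (hg : ∀ x ∈ Icc a b, g x = g a + ∫ t in a..x, g' t)
    (hqc : ContinuousOn q (Icc a b)) (hqc' : ContinuousOn q' (Icc a b)) (hqa : q a = 0) (hqb : q b = 0)
    (hq : ∀ x ∈ Ioo a b, HasDerivAt q (q' x) x ∧ g x = DPh ε (q x) (q' x))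
    {η η' η'' : ℝ → ℝ} (hη : ∀ x, HasDerivAt η (η' x) x) (hη' : ∀ x, HasDerivAt η' (η'' x) x)
    (hηc : Continuous η'') (hη0 : ∀ x, 0 ≤ η x) (hηa : η' a = 0) (hηb : η' b = 0) :
    ∫ x in a..b, η x * sn ε (q x) ^ (p - 2) * inner ℝ (g' x) (q x) ≤
      ε ^ 2 * ∫ x in a..b, η'' x * (sn ε (q x) ^ p / p + sn ε (q x) ^ (p - 3) / (p - 3)) := by
  have hsp : ∀ x, 0 < sn ε (q x) := fun x => sn_pos hε _
  have hsc : ContinuousOn (fun x => sn ε (q x)) (Icc a b) := (sn_cont ε).comp_continuousOn hqc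
  have hpow : ∀ c : ℝ, ContinuousOn (fun x => sn ε (q x) ^ c) (Icc a b) := fun c =>
    hsc.rpow_const fun x _ => Or.inl (hsp x).ne'
  have hηC : ContinuousOn η (Icc a b) := fun x _ => (hη x).continuousAt.continuousWithinAt
  have hηC' : ContinuousOn η' (Icc a b) := fun x _ => (hη' x).continuousAt.continuousWithinAt
  have hηC'' : ContinuousOn η'' (Icc a b) := hηc.continuousOn
  set sd : ℝ → ℝ := fun x => 1 / sn ε (q x) * inner ℝ (q x) (q' x) with hsd
  have hsdc : ContinuousOn sd (Icc a b) :=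
    (continuousOn_const.div hsc fun x _ => (hsp x).ne').mul (hqc.inner hqc')
  have hs : ∀ x ∈ Ioo a b, HasDerivAt (fun x => sn ε (q x)) (sd x) x := by
    intro x hx
    have := (sn_deriv hε (q x)).comp_hasDerivAt x (hq x hx).1
    simpa [hsd] using! this
  -- the function `G(s)`
  set G : ℝ → ℝ := fun x => sn ε (q x) ^ p / p + sn ε (q x) ^ (p - 3) / (p - 3) with hG
  set G' : ℝ → ℝ := fun x => (sn ε (q x) ^ (p - 1) + sn ε (q x) ^ (p - 4)) * sd x with hG'
  have hGc : ContinuousOn G (Icc a b) := ((hpow p).div_const p).add ((hpow (p - 3)).div_const _)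
  have hGc' : ContinuousOn G' (Icc a b) := ((hpow _).add (hpow _)).mul hsdc
  have hGd : ∀ x ∈ Ioo a b, HasDerivAt G (G' x) x := by
    intro x hx
    have h1 := ((hs x hx).rpow_const (p := p) (Or.inl (hsp x).ne')).div_const p
    have h2 := ((hs x hx).rpow_const (p := p - 3) (Or.inl (hsp x).ne')).div_const (p - 3)
    refine (h1.add h2).congr_deriv ?_
    have hp0 : p ≠ 0 := by linarith
    have hp3 : p - 3 ≠ 0 := by linarith
    simp only [hG']
    rw [show p - 3 - 1 = p - 4 by ring]
    field_simp
  have hGf := ftc hGc hGc' hGd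
  have hηf := ftc hηC' hηC'' fun x _ => hη' x
  have cI : ∀ {E : Type} [NormedAddCommGroup E] {F : ℝ → E}, ContinuousOn F (Icc a b) → IntervalIntegrable F volume a b := by
    intro E _ F hF
    apply ContinuousOn.intervalIntegrable
    rwa [uIcc_of_le hab.le]
  have I1 := ibp_scalar hab.le (cI hGc') (cI hηC'') hGf hηf
  rw [hηa, hηb, mul_zero, mul_zero, sub_zero, intervalIntegral.integral_add (cI (hGc'.fun_mul hηC')) (cI (hGc.fun_mul hηC''))] at I1
  -- the test function
  set c : ℝ → ℝ := fun x => η x * sn ε (q x) ^ (p - 2) with hc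
  set c' : ℝ → ℝ := fun x => η' x * sn ε (q x) ^ (p - 2) + η x * (sd x * (p - 2) * sn ε (q x) ^ (p - 3)) with hc'
  have hcc : ContinuousOn c (Icc a b) := hηC.mul (hpow _)
  have hcc' : ContinuousOn c' (Icc a b) :=
    (hηC'.mul (hpow _)).add (hηC.mul ((hsdc.mul continuousOn_const).mul (hpow _)))
  have hΨc : ContinuousOn (fun x => c x • q x) (Icc a b) := hcc.smul hqc
  have hΨc' : ContinuousOn (fun x => c x • q' x + c' x • q x) (Icc a b) := (hcc.smul hqc').add (hcc'.smul hqc)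
  have hΨd : ∀ x ∈ Ioo a b, HasDerivAt (fun x => c x • q x) (c x • q' x + c' x • q x) x := by
    intro x hx
    have h1 : HasDerivAt c (c' x) x := by
      have h1 := ((hs x hx).rpow_const (p := p - 2) (Or.inl (hsp x).ne'))
      rw [show p - 2 - 1 = p - 3 by ring] at h1
      exact (hη x).mul h1
    exact h1.smul (hq x hx).1
  have I2 := ibp hab.le hgi (cI hΨc') hg (ftc hΨc hΨc' hΨd) hgc hΨc
  simp only [hqa, hqb, smul_zero, inner_zero_right, sub_zero] at I2
  have i1 : IntervalIntegrable (fun x => inner ℝ (g' x) (c x • q x)) volume a b := by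
    exact inner_ii hab.le hgi hΨc
  have hgΨ : ContinuousOn (fun x => inner ℝ (g x) (c x • q' x + c' x • q x)) (Icc a b) := hgc.inner hΨc'
  rw [intervalIntegral.integral_add i1 (cI hgΨ)] at I2
  have I3 : ε ^ 2 * ∫ x in a..b, G' x * η' x ≤ ∫ x in a..b, inner ℝ (g x) (c x • q' x + c' x • q x) := by
    rw [← intervalIntegral.integral_const_mul]
    apply intervalIntegral.integral_mono_on_of_le_Ioo hab.le (cI (continuousOn_const.fun_mul (hGc'.fun_mul hηC'))) (cI hgΨ)
    intro x hx
    have hsx := hsp x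
    have hsq := sn_sq ε (q x)
    have hin := DPh_inner hε (q x) (q' x)
    rw [← (hq x hx).2] at hin
    have hin2 : inner ℝ (g x) (q' x) = (1 / sn ε (q x) + ε ^ 2) * ‖q' x‖ ^ 2 - 1 / sn ε (q x) ^ 3 * inner ℝ (q x) (q' x) ^ 2 := by
      rw [(hq x hx).2, DPh_apply, inner_sub_left, real_inner_smul_left, real_inner_smul_left, real_inner_self_eq_norm_sq]
      ring
    have hk : inner ℝ (q x) (q' x) ^ 2 ≤ ‖q x‖ ^ 2 * ‖q' x‖ ^ 2 := by
      rw [← mul_pow, ← sq_abs (inner ℝ (q x) (q' x))]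
      have := abs_real_inner_le_norm (q x) (q' x)
      gcongr
    have hpos := alg_pos hsx hsq hk hp1.le
    rw [inner_add_right, inner_smul_right, inner_smul_right, real_inner_comm (q x) (g x), hin, hin2]
    simp only [hG', hc, hc', hsd]
    have hT := Real.rpow_pos_of_pos hsx (p - 2)
    have r1 : sn ε (q x) ^ (p - 1) = sn ε (q x) ^ (p - 2) * sn ε (q x) := by
      rw [← Real.rpow_add_one hsx.ne']; congr 1; ring
    have r3 : sn ε (q x) ^ (p - 3) = sn ε (q x) ^ (p - 2) / sn ε (q x) := by
      rw [← Real.rpow_sub_one hsx.ne']; congr 1; ring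
    have r4 : sn ε (q x) ^ (p - 4) = sn ε (q x) ^ (p - 2) / sn ε (q x) ^ 2 := by
      rw [← Real.rpow_sub_natCast hsx.ne']; congr 1; push_cast; ring
    rw [r1, r3, r4]
    set s := sn ε (q x)
    set T := s ^ (p - 2)
    set k := inner ℝ (q x) (q' x)
    have hfin := mul_nonneg (mul_nonneg (hη0 x) hT.le) hpos
    rw [← sub_nonneg]
    refine hfin.trans_eq ?_
    field_simp
    ring
  have I4 : ∫ x in a..b, η x * sn ε (q x) ^ (p - 2) * inner ℝ (g' x) (q x) = ∫ x in a..b, inner ℝ (g' x) (c x • q x) := by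
    congr 1; ext x; rw [inner_smul_right]
  have I5 : ∫ x in a..b, η'' x * G x = ∫ x in a..b, G x * η'' x := by
    congr 1; ext x; ring
  rw [I4]
  change _ ≤ ε ^ 2 * ∫ x in a..b, η'' x * G x
  rw [I5]
  have I6 : ∫ x in a..b, G x * η'' x = - ∫ x in a..b, G' x * η' x := by linarith
  rw [I6]
  linarith

theorem pt_lower {n : ℕ} {ε p : ℝ} (hε : 0 < ε) (hp1 : 1 < p) (hp2 : p ≤ 2) (q F : EE n) :
    (sn ε q ^ p - ‖F‖ ^ p) / p - ε ^ p ≤ sn ε q ^ (p - 2) * inner ℝ (q - F) q := by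
  have hs := sn_pos hε q
  have hsg := sn_ge hε q
  have hsq := sn_sq ε q
  have hT := Real.rpow_pos_of_pos hs (p - 2)
  have hp0 : 0 < p := by linarith
  have r0 : sn ε q ^ p = sn ε q ^ (p - 2) * sn ε q ^ 2 := by
    rw [← Real.rpow_add_natCast hs.ne']; congr 1; push_cast; ring
  have r1 : sn ε q ^ (p - 1) = sn ε q ^ (p - 2) * sn ε q := by
    rw [← Real.rpow_add_one hs.ne']; congr 1; ring
  have rε : sn ε q ^ (p - 2) * ε ^ 2 ≤ ε ^ p := by
    have : ε ^ p = ε ^ (p - 2) * ε ^ 2 := by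
      rw [← Real.rpow_add_natCast hε.ne']; congr 1; push_cast; ring
    rw [this]
    exact mul_le_mul_of_nonneg_right (Real.rpow_le_rpow_of_nonpos hε hsg (by linarith)) (sq_nonneg ε)
  have hY := Real.young_inequality_of_nonneg (norm_nonneg F) (Real.rpow_nonneg hs.le (p - 1))
    ((Real.holderConjugate_iff_eq_conjExponent hp1).2 rfl)
  rw [← Real.rpow_mul hs.le, mul_div_cancel₀ p (by linarith : p - 1 ≠ 0)] at hY
  have hY2 : sn ε q ^ p / (p / (p - 1)) = sn ε q ^ p - sn ε q ^ p / p := by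
    field_simp
  rw [hY2] at hY
  have hin : inner ℝ F q ≤ ‖F‖ * sn ε q := by
    refine (real_inner_le_norm F q).trans ?_
    gcongr
    apply Real.le_sqrt_of_sq_le
    nlinarith [sq_nonneg ε]
  have h1 : sn ε q ^ (p - 2) * inner ℝ F q ≤ ‖F‖ * sn ε q ^ (p - 1) := by
    calc _ ≤ sn ε q ^ (p - 2) * (‖F‖ * sn ε q) := by gcongr
      _ = _ := by rw [r1]; ring
  rw [inner_sub_left, real_inner_self_eq_norm_sq, show ‖q‖ ^ 2 = sn ε q ^ 2 - ε ^ 2 by linarith, mul_sub, mul_sub, ← r0,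
    sub_div]
  linarith

theorem pt_G {ε p s : ℝ} (hε : 0 < ε) (hs : ε ≤ s) (hp1 : 1 < p) (hp2 : p ≤ 2) :
    |ε ^ 2 * (s ^ p / p + s ^ (p - 3) / (p - 3))| ≤ ε ^ 2 * s ^ p + ε ^ (p - 1) := by
  have hs0 : 0 < s := hε.trans_le hs
  have h1 : |s ^ p / p| ≤ s ^ p := by
    rw [abs_of_nonneg (by positivity)]
    exact div_le_self (by positivity) hp1.le
  have h2 : |s ^ (p - 3) / (p - 3)| ≤ s ^ (p - 3) := by
    rw [abs_div, abs_of_nonneg (by positivity : 0 ≤ s ^ (p - 3)), abs_of_neg (by linarith : p - 3 < 0)]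
    exact div_le_self (by positivity) (by linarith)
  have h3 : ε ^ 2 * s ^ (p - 3) ≤ ε ^ (p - 1) := by
    have : ε ^ (p - 1) = ε ^ 2 * ε ^ (p - 3) := by
      rw [mul_comm, ← Real.rpow_add_natCast hε.ne']; congr 1; push_cast; ring
    rw [this]
    exact mul_le_mul_of_nonneg_left (Real.rpow_le_rpow_of_nonpos hε hs (by linarith)) (sq_nonneg ε)
  rw [abs_mul, abs_of_nonneg (by positivity : 0 ≤ ε ^ 2)]
  calc _ ≤ ε ^ 2 * (s ^ p + s ^ (p - 3)) := by
        gcongr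
        exact (abs_add_le _ _).trans (add_le_add h1 h2)
    _ ≤ _ := by linarith

theorem rpow_le_sq {t p : ℝ} (ht : 0 ≤ t) (hp1 : 1 < p) (hp2 : p ≤ 2) : t ^ p ≤ t ^ 2 + 1 := by
  rcases le_total t 1 with h | h
  · have := Real.rpow_le_one ht h (by linarith : 0 ≤ p)
    nlinarith [sq_nonneg t]
  · have := Real.rpow_le_rpow_of_exponent_le h hp2
    rw [Real.rpow_two] at this
    linarith

theorem pow_int {n : ℕ} {a b p : ℝ} {w : ℝ → EE n} (hp1 : 1 < p) (hp2 : p ≤ 2)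
    (hm : AEStronglyMeasurable w (volume.restrict (Ioo a b)))
    (h : IntegrableOn (fun x => ‖w x‖ ^ 2) (Ioo a b)) : IntegrableOn (fun x => ‖w x‖ ^ p) (Ioo a b) := by
  have h2 : IntegrableOn (fun x => ‖w x‖ ^ 2 + 1) (Ioo a b) := h.add (integrable_const (1:ℝ))
  refine Integrable.mono' h2 ?_ (Eventually.of_forall fun x => ?_)
  · exact (Real.continuous_rpow_const (by linarith)).comp_aestronglyMeasurable hm.norm
  · rw [Real.norm_eq_abs, abs_of_nonneg (by positivity)]
    exact rpow_le_sq (norm_nonneg _) hp1 hp2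

theorem main_est {n : ℕ} {a b lam ε : ℝ} (hab : a < b) (hε : 0 < ε) (hlam : 0 < lam)
    {f f' u u' : ℝ → EE n} (hf : InH1 a b f f') (hfi : IntervalIntegrable f' volume a b)
    (h : IsMinimizerEps lam ε a b f u u') :
    ∃ q : ℝ → EE n, ContinuousOn q (Icc a b) ∧ (∀ᵐ x ∂(volume.restrict (Ioo a b)), u' x = q x) ∧
    ∀ (p : ℝ), 1 < p → p ≤ 2 → ∀ (η η' η'' : ℝ → ℝ) (K : ℝ), (∀ x, HasDerivAt η (η' x) x) →
      (∀ x, HasDerivAt η' (η'' x) x) → Continuous η'' → (∀ x, 0 ≤ η x) → η' a = 0 → η' b = 0 →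
      (∀ x ∈ Icc a b, |η'' x| ≤ K) →
      ∫ x in a..b, η x * sn ε (q x) ^ p ≤ (∫ x in a..b, η x * ‖f' x‖ ^ p) +
        p * (ε ^ p * (∫ x in a..b, η x) +
          lam * (K * (ε ^ 2 * (∫ x in a..b, sn ε (q x) ^ p) + ε ^ (p - 1) * (b - a)))) := by
  obtain ⟨q, q', hqc, hqc', hqa, hqb, hae, hq⟩ := regularity hab hε hlam hf.1 h
  refine ⟨q, hqc, hae, ?_⟩
  intro p hp1 hp2 η η' η'' K hη hη' hηc hη0 hηa hηb hK
  have hp0 : 0 < p := by linarith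
  have hui := min_ii hab hε hf.1 h
  have hgi : IntervalIntegrable (fun x => (1 / lam) • (u' x - f' x)) volume a b := (hui.sub hfi).smul (1 / lam)
  have cI : ∀ {F : ℝ → ℝ}, ContinuousOn F (Icc a b) → IntervalIntegrable F volume a b := by
    intro F hF
    apply ContinuousOn.intervalIntegrable
    rwa [uIcc_of_le hab.le]
  have hη_c : ContinuousOn η (Icc a b) := fun x _ => (hη x).continuousAt.continuousWithinAt
  have hsp : ∀ x, 0 < sn ε (q x) := fun x => sn_pos hε _
  have hsc : ContinuousOn (fun x => sn ε (q x)) (Icc a b) := (sn_cont ε).comp_continuousOn hqc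
  have hpow : ∀ c : ℝ, ContinuousOn (fun x => sn ε (q x) ^ c) (Icc a b) := fun c =>
    hsc.rpow_const fun x _ => Or.inl (hsp x).ne'
  have haI : a ∈ Icc a b := left_mem_Icc.2 hab.le
  have hk := key_ineq (g := fun x => (1 / lam) • (u x - f x)) (g' := fun x => (1 / lam) • (u' x - f' x))
    hab hε hp1 hp2 ((h.1.1.sub hf.1).const_smul (1 / lam)) hgi (by
      intro x hx
      rw [intervalIntegral.integral_smul, intervalIntegral.integral_sub (ii_mono hui hab.le haI hx)
        (ii_mono hfi hab.le haI hx), ← h.1.2.2 a haI x hx, ← hf.2.2 a haI x hx, ← smul_add]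
      congr 1; abel) hqc hqc' hqa hqb hq hη hη' hηc hη0 hηa hηb
  have e1 : ∫ x in a..b, η x * sn ε (q x) ^ (p - 2) * inner ℝ ((1 / lam) • (u' x - f' x)) (q x)
      = (1 / lam) * ∫ x in a..b, inner ℝ (u' x - f' x) ((η x * sn ε (q x) ^ (p - 2)) • q x) := by
    rw [← intervalIntegral.integral_const_mul]
    congr 1; ext x
    rw [real_inner_smul_left, inner_smul_right]; ring
  have iL : IntervalIntegrable (fun x => inner ℝ (u' x - f' x) ((η x * sn ε (q x) ^ (p - 2)) • q x)) volume a b :=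
    inner_ii hab.le (hui.sub hfi) ((hη_c.mul (hpow _)).smul hqc)
  have ifp : IntervalIntegrable (fun x => ‖f' x‖ ^ p) volume a b :=
    (ii_iff hab.le).2 (pow_int hp1 hp2 ((ii_iff hab.le).1 hfi).aestronglyMeasurable hf.2.1)
  have iηf : IntervalIntegrable (fun x => η x * ‖f' x‖ ^ p) volume a b := by
    apply ifp.continuousOn_mul
    rwa [uIcc_of_le hab.le]
  have iηs : IntervalIntegrable (fun x => η x * sn ε (q x) ^ p) volume a b := cI (hη_c.mul (hpow p))
  have hlow : ∫ x in a..b, ((1 / p) * (η x * sn ε (q x) ^ p - η x * ‖f' x‖ ^ p) - ε ^ p * η x) ≤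
      ∫ x in a..b, inner ℝ (u' x - f' x) ((η x * sn ε (q x) ^ (p - 2)) • q x) := by
    rw [← ii_eq hab.le, ← ii_eq hab.le]
    apply setIntegral_mono_ae_restrict
    · exact (ii_iff hab.le).1 (((iηs.sub iηf).const_mul _).sub ((cI hη_c).const_mul _))
    · exact (ii_iff hab.le).1 iL
    · filter_upwards [hae] with x hx
      rw [hx, inner_smul_right]
      have := mul_le_mul_of_nonneg_left (pt_lower hε hp1 hp2 (q x) (f' x)) (hη0 x)
      refine le_trans (le_of_eq ?_) (this.trans (le_of_eq ?_)) <;> ring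
  rw [intervalIntegral.integral_sub ((iηs.sub iηf).const_mul _) ((cI hη_c).const_mul _),
    intervalIntegral.integral_const_mul, intervalIntegral.integral_const_mul,
    intervalIntegral.integral_sub iηs iηf] at hlow
  have hup : ε ^ 2 * ∫ x in a..b, η'' x * (sn ε (q x) ^ p / p + sn ε (q x) ^ (p - 3) / (p - 3)) ≤
      K * (ε ^ 2 * (∫ x in a..b, sn ε (q x) ^ p) + ε ^ (p - 1) * (b - a)) := by
    have : K * (ε ^ 2 * (∫ x in a..b, sn ε (q x) ^ p) + ε ^ (p - 1) * (b - a)) =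
        ∫ x in a..b, K * (ε ^ 2 * sn ε (q x) ^ p + ε ^ (p - 1)) := by
      rw [intervalIntegral.integral_const_mul, intervalIntegral.integral_add ((cI (hpow p)).const_mul _)
        intervalIntegrable_const, intervalIntegral.integral_const_mul, intervalIntegral.integral_const, smul_eq_mul]
      ring
    rw [this, ← intervalIntegral.integral_const_mul]
    apply intervalIntegral.integral_mono_on hab.le
    · exact (cI (hηc.continuousOn.mul (((hpow p).div_const p).add ((hpow (p - 3)).div_const _)))).const_mul _
    · exact (((cI (hpow p)).const_mul _).add intervalIntegrable_const).const_mul _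
    · intro x hx
      refine (le_abs_self _).trans ?_
      rw [mul_left_comm, abs_mul]
      exact mul_le_mul (hK x hx) (pt_G hε (sn_ge hε _) hp1 hp2) (abs_nonneg _) ((abs_nonneg _).trans (hK x hx))
  rw [e1] at hk
  have h3 := (hk.trans hup)
  rw [one_div, inv_mul_le_iff₀ hlam] at h3
  have h4 := hlow.trans h3
  have h5 : ∀ A B C D : ℝ, 1 / p * (A - B) - C ≤ D → A ≤ B + p * (C + D) := by
    intro A B C D h
    have : (A - B) = p * (1 / p * (A - B)) := by field_simp
    nlinarith
  exact h5 _ _ _ _ h4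

theorem bump {a b x₀ r R : ℝ} (hr : 0 < r) (hrR : r < R) (ha : a < x₀ - R) (hb : x₀ + R < b) :
    ∃ (η η' η'' : ℝ → ℝ) (K : ℝ), (∀ x, HasDerivAt η (η' x) x) ∧
      (∀ x, HasDerivAt η' (η'' x) x) ∧ Continuous η'' ∧ (∀ x, 0 ≤ η x) ∧ (∀ x, η x ≤ 1) ∧ η' a = 0 ∧ η' b = 0 ∧
      0 ≤ K ∧ (∀ x ∈ Icc a b, |η'' x| ≤ K) ∧ (∀ x ∈ Icc (x₀ - r) (x₀ + r), η x = 1) ∧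
      (∀ x, x ∉ Icc (x₀ - R) (x₀ + R) → η x = 0) := by
  let η : ContDiffBump x₀ := ⟨r, R, hr, hrR⟩
  have hc : ContDiff ℝ 2 (η : ℝ → ℝ) := η.contDiff
  have hc1 : ContDiff ℝ 1 (deriv (η : ℝ → ℝ)) := by
    have : ContDiff ℝ (1 + 1) (η : ℝ → ℝ) := by norm_num; exact hc
    exact (contDiff_succ_iff_deriv.1 this).2.2
  have hc2 : Continuous (deriv (deriv (η : ℝ → ℝ))) := hc1.continuous_deriv le_rfl
  obtain ⟨K, hK⟩ := isCompact_Icc.exists_bound_of_continuousOn (hc2.continuousOn (s := Icc a b))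
  have h0 : ∀ x, x ∉ Icc (x₀ - R) (x₀ + R) → η x = 0 := by
    intro x hx
    apply η.zero_of_le_dist
    change R ≤ dist x x₀
    rw [← Real.closedBall_eq_Icc, Metric.mem_closedBall, not_le] at hx
    exact hx.le
  have hd0 : ∀ x, x ∉ Icc (x₀ - R) (x₀ + R) → deriv (η : ℝ → ℝ) x = 0 := by
    intro x hx
    have : (η : ℝ → ℝ) =ᶠ[nhds x] fun _ => 0 := by
      filter_upwards [isClosed_Icc.isOpen_compl.mem_nhds hx] with y hy
      exact h0 y hy
    rw [this.deriv_eq]; simp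
  refine ⟨η, deriv η, deriv (deriv η), max K 0, ?_, ?_, hc2, fun x => η.nonneg, fun x => η.le_one,
    hd0 a ?_, hd0 b ?_, le_max_right _ _, fun x hx => (hK x hx).trans (le_max_left _ _), ?_, h0⟩
  · exact fun x => (hc.differentiable (by norm_num)).differentiableAt.hasDerivAt
  · exact fun x => (hc1.differentiable (by norm_num)).differentiableAt.hasDerivAt
  · rintro ⟨h1, h2⟩; linarith
  · rintro ⟨h1, h2⟩; linarith
  · intro x hx
    apply η.one_of_mem_closedBall
    change x ∈ Metric.closedBall x₀ r
    rwa [Real.closedBall_eq_Icc]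

theorem main_case {n : ℕ} {a b : ℝ} (hab : a < b) {lam : ℝ} (hlam : 0 < lam)
    {f f' : ℝ → EE n} (hf : InH1 a b f f') (hfi : IntervalIntegrable f' volume a b)
    {u u' : ℝ → ℝ → EE n}
    (hu : ∀ ε : ℝ, 0 < ε → IsMinimizerEps lam ε a b f (u ε) (u' ε))
    {p : ℝ} (hp1 : 1 < p) (hp2 : p ≤ 2)
    {x₀ r R : ℝ} (hr : 0 < r) (hrR : r < R)
    (hBR : Set.Icc (x₀ - R) (x₀ + R) ⊆ Set.Ioo a b) :
    Filter.limsup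
        (fun ε : ℝ => ∫ x in (x₀ - r)..(x₀ + r), Real.sqrt (‖u' ε x‖ ^ 2 + ε ^ 2) ^ p)
        (nhdsWithin 0 (Set.Ioi 0))
      ≤ ∫ x in (x₀ - R)..(x₀ + R), ‖f' x‖ ^ p := by
  have ha : a < x₀ - R := (hBR ⟨le_rfl, by linarith⟩).1
  have hb : x₀ + R < b := (hBR ⟨by linarith, le_rfl⟩).2
  have hp0 : 0 < p := by linarith
  obtain ⟨η, η', η'', K, hη, hη', hηc, hη0, hη1, hηa, hηb, hK0, hK, hηr, hηR⟩ := bump hr hrR ha hb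
  have hη_c : Continuous η := continuous_iff_continuousAt.2 fun x => (hη x).continuousAt
  have ifp : ∀ p : ℝ, 1 < p → p ≤ 2 → IntervalIntegrable (fun x => ‖f' x‖ ^ p) volume a b := fun p hp1 hp2 =>
    (ii_iff hab.le).2 (pow_int hp1 hp2 ((ii_iff hab.le).1 hfi).aestronglyMeasurable hf.2.1)
  set F := ∫ x in (x₀ - R)..(x₀ + R), ‖f' x‖ ^ p with hF
  set A := ∫ x in a..b, ‖f' x‖ ^ (2 : ℝ) with hA
  set C := b - a with hC
  have hC0 : 0 < C := sub_pos.2 hab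
  set T : ℝ → ℝ := fun ε => F + p * (ε ^ p * C + lam * (K * (ε ^ 2 * (A + 2 * (ε ^ (2:ℝ) * C) + C) + ε ^ (p - 1) * C))) with hT
  have key : ∀ ε : ℝ, 0 < ε →
      ∫ x in (x₀ - r)..(x₀ + r), Real.sqrt (‖u' ε x‖ ^ 2 + ε ^ 2) ^ p ≤ T ε := by
    intro ε hε
    obtain ⟨q, hqc, hae, hq⟩ := main_est hab hε hlam hf hfi (hu ε hε)
    have cI : ∀ {F : ℝ → ℝ}, ContinuousOn F (Icc a b) → IntervalIntegrable F volume a b := by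
      intro F hF
      apply ContinuousOn.intervalIntegrable
      rwa [uIcc_of_le hab.le]
    have hsp : ∀ x, 0 < sn ε (q x) := fun x => sn_pos hε _
    have hsc : ContinuousOn (fun x => sn ε (q x)) (Icc a b) := (sn_cont ε).comp_continuousOn hqc
    have hpow : ∀ c : ℝ, ContinuousOn (fun x => sn ε (q x) ^ c) (Icc a b) := fun c =>
      hsc.rpow_const fun x _ => Or.inl (hsp x).ne'
    have h2 := hq 2 (by norm_num) le_rfl (fun _ => 1) (fun _ => 0) (fun _ => 0) 0 (fun x => hasDerivAt_const x 1)
      (fun x => hasDerivAt_const x 0) continuous_const (fun _ => zero_le_one) rfl rfl (fun _ _ => by simp)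
    simp only [one_mul, zero_mul, mul_zero, add_zero, intervalIntegral.integral_const, smul_eq_mul, mul_one] at h2
    have h3 : ∫ x in a..b, sn ε (q x) ^ p ≤ A + 2 * (ε ^ (2:ℝ) * C) + C := by
      have : ∫ x in a..b, sn ε (q x) ^ p ≤ ∫ x in a..b, (sn ε (q x) ^ (2:ℝ) + 1) := by
        apply intervalIntegral.integral_mono_on hab.le (cI (hpow p)) (cI ((hpow 2).fun_add continuousOn_const))
        intro x _
        rw [Real.rpow_two]
        exact rpow_le_sq (hsp x).le hp1 hp2
      rw [intervalIntegral.integral_add (cI (hpow 2)) intervalIntegrable_const, intervalIntegral.integral_const,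
        smul_eq_mul, mul_one] at this
      linarith
    have h4 := hq p hp1 hp2 η η' η'' K hη hη' hηc hη0 hηa hηb hK
    have h5 : ∫ x in a..b, η x ≤ C := by
      have := intervalIntegral.integral_mono_on (g := fun _ => (1:ℝ)) hab.le (cI hη_c.continuousOn) intervalIntegrable_const
        (fun x _ => hη1 x)
      simpa using this
    have iηs : IntervalIntegrable (fun x => η x * sn ε (q x) ^ p) volume a b := cI (hη_c.continuousOn.mul (hpow p))
    have iηf : IntervalIntegrable (fun x => η x * ‖f' x‖ ^ p) volume a b :=
      (ifp p hp1 hp2).continuousOn_mul hη_c.continuousOn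
    have h6 : ∫ x in (x₀ - r)..(x₀ + r), Real.sqrt (‖u' ε x‖ ^ 2 + ε ^ 2) ^ p ≤ ∫ x in a..b, η x * sn ε (q x) ^ p := by
      have e : ∫ x in (x₀ - r)..(x₀ + r), Real.sqrt (‖u' ε x‖ ^ 2 + ε ^ 2) ^ p =
          ∫ x in (x₀ - r)..(x₀ + r), η x * sn ε (q x) ^ p := by
        rw [← ii_eq (by linarith), ← ii_eq (by linarith)]
        apply setIntegral_congr_ae measurableSet_Ioo
        rw [ae_restrict_iff' measurableSet_Ioo] at hae
        filter_upwards [hae] with x hx hxI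
        rw [hx ⟨by linarith [hxI.1], by linarith [hxI.2]⟩, hηr x (Ioo_subset_Icc_self hxI), one_mul]
        rfl
      rw [e]
      apply intervalIntegral.integral_mono_interval (by linarith) (by linarith) (by linarith) _ iηs
      exact Eventually.of_forall fun x => mul_nonneg (hη0 x) (Real.rpow_nonneg (hsp x).le _)
    have h7 : ∫ x in a..b, η x * ‖f' x‖ ^ p ≤ F := by
      have m1 : a ∈ Icc a b := ⟨le_rfl, hab.le⟩
      have m2 : x₀ - R ∈ Icc a b := ⟨by linarith, by linarith⟩
      have m3 : x₀ + R ∈ Icc a b := ⟨by linarith, by linarith⟩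
      have m4 : b ∈ Icc a b := ⟨hab.le, le_rfl⟩
      rw [← intervalIntegral.integral_add_adjacent_intervals (ii_mono iηf hab.le m1 m2) (ii_mono iηf hab.le m2 m4),
        ← intervalIntegral.integral_add_adjacent_intervals (ii_mono iηf hab.le m2 m3) (ii_mono iηf hab.le m3 m4)]
      have z1 : ∫ x in a..(x₀ - R), η x * ‖f' x‖ ^ p = 0 := by
        rw [← ii_eq ha.le]
        apply setIntegral_eq_zero_of_forall_eq_zero
        intro x hx
        rw [hηR x (fun h => by linarith [h.1, hx.2]), zero_mul]
      have z2 : ∫ x in (x₀ + R)..b, η x * ‖f' x‖ ^ p = 0 := by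
        rw [← ii_eq hb.le]
        apply setIntegral_eq_zero_of_forall_eq_zero
        intro x hx
        rw [hηR x (fun h => by linarith [h.2, hx.1]), zero_mul]
      rw [z1, z2, zero_add, add_zero]
      apply intervalIntegral.integral_mono_on (by linarith) (ii_mono iηf hab.le m2 m3)
        (ii_mono (ifp p hp1 hp2) hab.le m2 m3)
      intro x _
      exact mul_le_of_le_one_left (by positivity) (hη1 x)
    refine h6.trans (h4.trans ?_)
    simp only [hT]
    have : 0 ≤ ε ^ p := by positivity
    gcongr
  have hlim : Tendsto T (nhdsWithin 0 (Ioi 0)) (nhds F) := by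
    have hc : Continuous T := by
      have r1 : Continuous fun ε : ℝ => ε ^ p := Real.continuous_rpow_const hp0.le
      have r2 : Continuous fun ε : ℝ => ε ^ (2:ℝ) := Real.continuous_rpow_const (by norm_num)
      have r3 : Continuous fun ε : ℝ => ε ^ (p - 1) := Real.continuous_rpow_const (by linarith)
      simp only [hT]
      fun_prop
    have h0 : T 0 = F := by
      simp only [hT]
      rw [Real.zero_rpow hp0.ne', Real.zero_rpow (by linarith : p - 1 ≠ 0)]
      ring
    rw [← h0]
    exact hc.continuousAt.tendsto.mono_left nhdsWithin_le_nhds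
  rw [← hlim.limsup_eq]
  apply limsup_le_limsup
  · filter_upwards [self_mem_nhdsWithin] with ε hε using key ε hε
  · apply IsBoundedUnder.isCoboundedUnder_le
    exact isBoundedUnder_of ⟨0, fun ε => intervalIntegral.integral_nonneg (by linarith) fun x _ => by positivity⟩
  · exact hlim.isBoundedUnder_le

/-- `limsup_{ε → 0⁺} ∫_{B_r(x₀)} |u_ε'|_ε^p ≤ ∫_{B_R(x₀)} ‖f'‖^p` for the
family of minimizers `u_ε` of `E_ε`, where `p ∈ (1,2]` and `B_r(x₀) ⊆ B_R(x₀) ⊆ I`. -/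
theorem minimizerEps_limsup_local_gradient_estimate
    {n : ℕ} (hn : 1 ≤ n) (a b : ℝ) (hab : a < b) (lam : ℝ) (hlam : 0 < lam)
    (f f' : ℝ → EuclideanSpace ℝ (Fin n)) (hf : InH1 a b f f')
    (u u' : ℝ → ℝ → EuclideanSpace ℝ (Fin n))
    (hu : ∀ ε : ℝ, 0 < ε → IsMinimizerEps lam ε a b f (u ε) (u' ε))
    (p : ℝ) (hp1 : 1 < p) (hp2 : p ≤ 2)
    (x₀ : ℝ) (hx₀ : x₀ ∈ Set.Ioo a b) (r R : ℝ) (hr : 0 < r) (hrR : r < R)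
    (hBR : Set.Icc (x₀ - R) (x₀ + R) ⊆ Set.Ioo a b) :
    Filter.limsup
        (fun ε : ℝ => ∫ x in (x₀ - r)..(x₀ + r), Real.sqrt (‖u' ε x‖ ^ 2 + ε ^ 2) ^ p)
        (nhdsWithin 0 (Set.Ioi 0))
      ≤ ∫ x in (x₀ - R)..(x₀ + R), ‖f' x‖ ^ p := by
  rcases h1_dich hab hf with hfi | hfc
  · exact main_case hab hlam hf hfi hu hp1 hp2 hr hrR hBR
  · have hf0 : InH1 a b f (fun _ => 0) := by
      refine ⟨hf.1, by simp, ?_⟩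
      intro x hx y hy
      simp [hfc x hx, hfc y hy]
    have h := main_case hab hlam hf0 intervalIntegrable_const hu hp1 hp2 hr hrR hBR
    have hz : ∫ x in (x₀ - R)..(x₀ + R), ‖(0 : EuclideanSpace ℝ (Fin n))‖ ^ p = 0 := by
      rw [norm_zero, Real.zero_rpow (by linarith)]; simp
    rw [hz] at h
    exact h.trans (intervalIntegral.integral_nonneg (by linarith) fun x _ => by positivity)
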